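/- The refraction map is a homeomorphism: Let F₁ and F₂ be Minkowski norms on ℝ² that agree on the line spanned by a nonzero vector v (that is, F₁(s·v) = F₂(s·v) for all s ∈ ℝ), and let φ : ℝ² → ℝ be a nonzero linear functional with φ(v) = 0. Let A₁ = {u ∈ ℝ² : F₁(u) = 1 and φ(u) ≥ 0} and A₂ = {u ∈ ℝ² : F₂(u) = 1 and φ(u) ≥ 0}. Then the map T : A₁ → A₂ characterized by ⟨u, v⟩_u^{F₁} = ⟨T(u), v⟩_{T(u)}^{F₂} is a well-defined bijection, and both T and its inverse are continuous (T is a homeomorphism between A₁ and A₂). -/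

import Mathlib

/-!
On the indicatrix `F = 1`, Euler's relation for the homogeneous function `F²` turns `⟨u, v⟩_u^F` into
`α_u(v)`, where `α_u = ½ D(F²)(u)`. The proof shows that `u ↦ α_u(v)` is a homeomorphism from the
half-indicatrix `A = {F = 1, φ ≥ 0}` onto the interval `[-F(-v), F(v)]`. The interval depends only
on the values of `F` at `±v`, where `F₁` and `F₂` agree, so the refraction map is the homeomorphism
for `F₁` followed by the inverse of the one for `F₂`.

The main tool is the fundamental inequality `α_u(w) ≤ F(w)` for `F(u) = 1`, strict when
`F(w) = 1` and `w ≠ u` (`half_fderiv_lt_one`); it follows from the strict convexity of `F²` along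
segments avoiding the origin.

* The inequality at `±v` puts the values in the interval, the points `±v / F(±v)` attain its ends,
  and the intermediate value theorem along a path in `A` gives everything between.
* For injectivity, suppose `α_u(v) = α_w(v)` with `u ≠ w` in `A`. In dimension two this forces
  `α_u - α_w = c φ`. Evaluating at `u` gives `c φ(u) = 1 - α_w(u) > 0`, and at `w` gives
  `c φ(w) = α_u(w) - 1 < 0`; as `φ(u), φ(w) ≥ 0`, these are incompatible.
* Continuity of the inverse is automatic, because `A` is compact.
-/

/-- One half of the second Fréchet derivative of `F²` at `y`, evaluated at `(u, w)`:
the fundamental bilinear form `⟨u,w⟩_y^F` associated to a Minkowski norm. -/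
noncomputable def minkHess {V : Type*} [NormedAddCommGroup V] [NormedSpace ℝ V]
    (F : V → ℝ) (y u w : V) : ℝ :=
  (1 / 2) * fderiv ℝ (fun z => fderiv ℝ (fun x => F x ^ 2) z) y u w

/-- `F` is a Minkowski norm on `V`. -/
structure IsMinkowskiNorm {V : Type*} [NormedAddCommGroup V] [NormedSpace ℝ V]
    (F : V → ℝ) : Prop where
  continuous : Continuous F
  nonneg : ∀ y : V, 0 ≤ F y
  pos : ∀ y : V, y ≠ 0 → 0 < F y
  smooth : ContDiffOn ℝ (⊤ : ℕ∞) F {(0 : V)}ᶜ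
  homog : ∀ l : ℝ, 0 ≤ l → ∀ y : V, F (l • y) = l * F y
  posdef : ∀ y : V, y ≠ 0 → ∀ u : V, u ≠ 0 → 0 < minkHess F y u u

namespace IsMinkowskiNorm

open Set

/-! ### Euler's relations and the fundamental inequality -/

section General

variable {V : Type*} [NormedAddCommGroup V] [NormedSpace ℝ V] {F : V → ℝ}

lemma ne_zero_of_eq_one (hF : IsMinkowskiNorm F) {u : V} (hu : F u = 1) : u ≠ 0 := by
  rintro rfl
  have := hF.homog 0 le_rfl 0
  simp only [smul_zero, zero_mul] at this
  linarith

lemma contDiffOn_sq (hF : IsMinkowskiNorm F) :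
    ContDiffOn ℝ (⊤ : ℕ∞) (fun x => F x ^ 2) {(0 : V)}ᶜ :=
  hF.smooth.pow 2

lemma differentiableAt_sq (hF : IsMinkowskiNorm F) {x : V} (hx : x ≠ 0) :
    DifferentiableAt ℝ (fun x => F x ^ 2) x :=
  (hF.contDiffOn_sq.contDiffAt (isOpen_compl_singleton.mem_nhds hx)).differentiableAt (by simp)

lemma differentiableAt_fderiv (hF : IsMinkowskiNorm F) {x : V} (hx : x ≠ 0) :
    DifferentiableAt ℝ (fun z => fderiv ℝ (fun x => F x ^ 2) z) x :=
  (((hF.contDiffOn_sq.contDiffAt (isOpen_compl_singleton.mem_nhds hx)).fderiv_right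
    (m := 1) (WithTop.coe_le_coe.mpr le_top))).differentiableAt (by simp)

lemma fderiv_smul (hF : IsMinkowskiNorm F) {t : ℝ} (ht : 0 < t) (z : V) :
    fderiv ℝ (fun x => F x ^ 2) (t • z) = t • fderiv ℝ (fun x => F x ^ 2) z := by
  have h1 : (fun x => F (t • x) ^ 2) = fun x => t ^ 2 • F x ^ 2 := by
    funext x
    rw [hF.homog t ht.le]
    simp [mul_pow]
  have h2 : fderiv ℝ (fun x => F (t • x) ^ 2) z
      = t • fderiv ℝ (fun x => F x ^ 2) (t • z) :=
    fderiv_comp_smul (f := fun x => F x ^ 2) t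
  have h3 : fderiv ℝ (fun x => t ^ 2 • F x ^ 2) z = t ^ 2 • fderiv ℝ (fun x => F x ^ 2) z :=
    congrFun (fderiv_const_smul_field (t ^ 2) (f := fun x => F x ^ 2)) z
  rw [h1, h3, pow_two, mul_smul] at h2
  exact (smul_right_injective _ ht.ne' h2).symm

lemma hasDerivAt_smul_one (u : V) : HasDerivAt (fun t : ℝ => t • u) u 1 := by
  simpa using (hasDerivAt_id (1 : ℝ)).smul_const u

/-- Euler's relation for `D(F²)`, which is homogeneous of degree one. -/
lemma minkHess_self (hF : IsMinkowskiNorm F) {u : V} (hu : u ≠ 0) (v : V) :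
    minkHess F u u v = (1 / 2) * fderiv ℝ (fun x => F x ^ 2) u v := by
  have h1 : HasDerivAt (fun t : ℝ => fderiv ℝ (fun x => F x ^ 2) (t • u))
      (fderiv ℝ (fun z => fderiv ℝ (fun x => F x ^ 2) z) u u) 1 := by
    have hd := (hF.differentiableAt_fderiv hu).hasFDerivAt
    exact HasFDerivAt.comp_hasDerivAt_of_eq (1 : ℝ) hd (hasDerivAt_smul_one u) (by simp)
  have h2 : HasDerivAt (fun t : ℝ => fderiv ℝ (fun x => F x ^ 2) (t • u))
      (fderiv ℝ (fun x => F x ^ 2) u) 1 := by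
    refine (hasDerivAt_smul_one (fderiv ℝ (fun x => F x ^ 2) u)).congr_of_eventuallyEq ?_
    filter_upwards [lt_mem_nhds (zero_lt_one' ℝ)] with t ht using hF.fderiv_smul ht u
  rw [minkHess, h1.unique h2]

/-- Euler's relation for `F²`, which is homogeneous of degree two. -/
lemma fderiv_self (hF : IsMinkowskiNorm F) {u : V} (hu : u ≠ 0) :
    fderiv ℝ (fun x => F x ^ 2) u u = 2 * F u ^ 2 := by
  have h1 : HasDerivAt (fun t : ℝ => F (t • u) ^ 2) (fderiv ℝ (fun x => F x ^ 2) u u) 1 :=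
    HasFDerivAt.comp_hasDerivAt_of_eq (1 : ℝ) (hF.differentiableAt_sq hu).hasFDerivAt
      (hasDerivAt_smul_one u) (by simp)
  have h2 : HasDerivAt (fun t : ℝ => F (t • u) ^ 2) (2 * F u ^ 2) 1 := by
    have h3 : HasDerivAt (fun t : ℝ => t ^ 2 * F u ^ 2) (2 * F u ^ 2) 1 := by
      simpa using (hasDerivAt_pow 2 (1 : ℝ)).mul_const (F u ^ 2)
    refine h3.congr_of_eventuallyEq ?_
    filter_upwards [lt_mem_nhds (zero_lt_one' ℝ)] with t ht
    rw [hF.homog t ht.le, mul_pow]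
  exact h1.unique h2

/-- The strict fundamental inequality: the tangent line to the indicatrix at `u` meets it
only at `u`. -/
lemma half_fderiv_lt_one (hF : IsMinkowskiNorm F) {u w : V} (hu : F u = 1) (hw : F w = 1)
    (huw : w ≠ u) : (1 / 2) * fderiv ℝ (fun x => F x ^ 2) u w < 1 := by
  have hu0 := hF.ne_zero_of_eq_one hu
  have hself := hF.fderiv_self hu0
  rw [hu] at hself
  by_cases hseg : ∃ t ∈ Icc (0 : ℝ) 1, u + t • (w - u) = 0
  · -- If the segment passes through the origin, `w` is a negative multiple of `u`.
    obtain ⟨t, ht, h0⟩ := hseg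
    have htpos : 0 < t := by
      rcases ht.1.lt_or_eq with h | h
      · exact h
      · subst h
        simp [hu0] at h0
    have h4 := congrArg (fderiv ℝ (fun x => F x ^ 2) u) h0
    simp only [map_add, map_smul, map_sub, map_zero, smul_eq_mul, hself] at h4
    have h5 : t * (2 - fderiv ℝ (fun x => F x ^ 2) u w) = 2 := by linarith
    by_contra! h6
    have h7 : t * (2 - fderiv ℝ (fun x => F x ^ 2) u w) ≤ 0 :=
      mul_nonpos_of_nonneg_of_nonpos htpos.le (by linarith)
    linarith
  · -- Otherwise apply Rolle's theorem to `t ↦ F² (u + t (w - u))`, whose derivative is increasing.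
    push Not at hseg
    have hline : ∀ t : ℝ, HasDerivAt (fun t : ℝ => u + t • (w - u)) (w - u) t := fun t => by
      simpa using ((hasDerivAt_id t).smul_const (w - u)).const_add u
    have hp : ∀ t ∈ Icc (0 : ℝ) 1, HasDerivAt (fun t : ℝ => F (u + t • (w - u)) ^ 2)
        (fderiv ℝ (fun x => F x ^ 2) (u + t • (w - u)) (w - u)) t := fun t ht =>
      HasFDerivAt.comp_hasDerivAt_of_eq t
        (hF.differentiableAt_sq (hseg t ht)).hasFDerivAt (hline t) rfl
    have hp' : ∀ t ∈ Icc (0 : ℝ) 1, HasDerivAt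
        (fun t : ℝ => fderiv ℝ (fun x => F x ^ 2) (u + t • (w - u)) (w - u))
        (fderiv ℝ (fun z => fderiv ℝ (fun x => F x ^ 2) z) (u + t • (w - u)) (w - u) (w - u)) t :=
      fun t ht => by
        have h8 : HasDerivAt (fun t : ℝ => fderiv ℝ (fun x => F x ^ 2) (u + t • (w - u)))
            (fderiv ℝ (fun z => fderiv ℝ (fun x => F x ^ 2) z) (u + t • (w - u)) (w - u)) t :=
          HasFDerivAt.comp_hasDerivAt_of_eq t
            (hF.differentiableAt_fderiv (hseg t ht)).hasFDerivAt (hline t) rfl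
        simpa using h8.clm_apply (hasDerivAt_const t (w - u))
    have hmono : StrictMonoOn
        (fun t : ℝ => fderiv ℝ (fun x => F x ^ 2) (u + t • (w - u)) (w - u)) (Icc 0 1) := by
      refine strictMonoOn_of_deriv_pos (convex_Icc 0 1)
        (fun t ht => (hp' t ht).continuousAt.continuousWithinAt) fun t ht => ?_
      rw [interior_Icc] at ht
      have ht' := Ioo_subset_Icc_self ht
      rw [(hp' t ht').deriv]
      have := hF.posdef _ (hseg t ht') _ (sub_ne_zero.mpr huw)
      rw [minkHess] at this
      linarith
    obtain ⟨c, hc, hc0⟩ := exists_hasDerivAt_eq_zero (zero_lt_one' ℝ)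
      (fun t ht => (hp t ht).continuousAt.continuousWithinAt) (by simp [hu, hw])
      (fun t ht => hp t (Ioo_subset_Icc_self ht))
    have h9 := hmono (left_mem_Icc.mpr zero_le_one) (Ioo_subset_Icc_self hc) hc.1
    simp only [hc0, zero_smul, add_zero, map_sub, hself] at h9
    linarith

lemma map_inv_smul (hF : IsMinkowskiNorm F) {x : V} (hx : x ≠ 0) : F ((F x)⁻¹ • x) = 1 := by
  have := hF.pos x hx
  rw [hF.homog _ (inv_nonneg.mpr this.le), inv_mul_cancel₀ this.ne']

/-- The fundamental inequality `½ D(F²)(u) x ≤ F x` on the indicatrix. -/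
lemma half_fderiv_le (hF : IsMinkowskiNorm F) {u : V} (hu : F u = 1) (x : V) :
    (1 / 2) * fderiv ℝ (fun x => F x ^ 2) u x ≤ F x := by
  by_cases hx : x = 0
  · subst hx
    simpa using hF.nonneg 0
  have hpos := hF.pos x hx
  have h1 : (1 / 2) * fderiv ℝ (fun x => F x ^ 2) u ((F x)⁻¹ • x) ≤ 1 := by
    by_cases h : (F x)⁻¹ • x = u
    · rw [h, hF.fderiv_self (hF.ne_zero_of_eq_one hu), hu]
      norm_num
    · exact (hF.half_fderiv_lt_one hu (hF.map_inv_smul hx) h).le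
  rw [map_smul, smul_eq_mul] at h1
  have h2 := mul_le_mul_of_nonneg_left h1 hpos.le
  calc (1 / 2) * fderiv ℝ (fun x => F x ^ 2) u x
      = F x * (1 / 2 * ((F x)⁻¹ * fderiv ℝ (fun x => F x ^ 2) u x)) := by field_simp
    _ ≤ F x := by linarith

end General

/-! ### The half-indicatrix in the plane -/

section Plane

/-- The plane `ℝ²` with its Euclidean norm. -/
abbrev Plane := EuclideanSpace ℝ (Fin 2)

variable {F : Plane → ℝ} {v : Plane} {φ : Plane →ₗ[ℝ] ℝ}

lemma exists_decomp (hv : v ≠ 0) (hφ : φ ≠ 0) (hφv : φ v = 0) :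
    ∃ e : Plane, φ e = 1 ∧ ∀ x, ∃ a : ℝ, x = φ x • e + a • v := by
  obtain ⟨e, he⟩ := LinearMap.surjective hφ 1
  refine ⟨e, he, fun x => ?_⟩
  have hk : Module.finrank ℝ (LinearMap.ker φ) = 1 := by
    have := LinearMap.finrank_range_add_finrank_ker φ
    rw [LinearMap.range_eq_top.mpr (LinearMap.surjective hφ)] at this
    simp at this
    omega
  obtain ⟨a, ha⟩ := exists_smul_eq_of_finrank_eq_one hk
    (x := (⟨v, hφv⟩ : LinearMap.ker φ)) (by simpa [Subtype.ext_iff] using hv)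
    ⟨x - φ x • e, by simp [he]⟩
  refine ⟨a, ?_⟩
  have := congrArg Subtype.val ha
  simp only [SetLike.val_smul] at this
  rw [this]
  abel

lemma minkHess_injOn (hF : IsMinkowskiNorm F) (hv : v ≠ 0) (hφ : φ ≠ 0) (hφv : φ v = 0) :
    InjOn (fun u => minkHess F u u v) {u | F u = 1 ∧ 0 ≤ φ u} := by
  rintro u ⟨hu, hφu⟩ w ⟨hw, hφw⟩ h
  by_contra hne
  have hu0 := hF.ne_zero_of_eq_one hu
  have hw0 := hF.ne_zero_of_eq_one hw
  simp only [hF.minkHess_self hu0, hF.minkHess_self hw0] at h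
  obtain ⟨e, -, hdec⟩ := exists_decomp hv hφ hφv
  have key : ∀ x, fderiv ℝ (fun x => F x ^ 2) u x - fderiv ℝ (fun x => F x ^ 2) w x
      = φ x * (fderiv ℝ (fun x => F x ^ 2) u e - fderiv ℝ (fun x => F x ^ 2) w e) := by
    intro x
    obtain ⟨a, ha⟩ := hdec x
    have h1 := congrArg (fderiv ℝ (fun x => F x ^ 2) u) ha
    have h2 := congrArg (fderiv ℝ (fun x => F x ^ 2) w) ha
    simp only [map_add, map_smul, smul_eq_mul] at h1 h2
    rw [h1, h2]
    linear_combination 2 * a * h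
  have ku := key u
  have kw := key w
  rw [hF.fderiv_self hu0, hu] at ku
  rw [hF.fderiv_self hw0, hw] at kw
  have lu := hF.half_fderiv_lt_one hw hu hne
  have lw := hF.half_fderiv_lt_one hu hw (Ne.symm hne)
  have hc : 0 < fderiv ℝ (fun x => F x ^ 2) u e - fderiv ℝ (fun x => F x ^ 2) w e :=
    pos_of_mul_pos_right (by rw [← ku]; linarith) hφu
  have := mul_nonneg hφw hc.le
  linarith

lemma continuousOn_minkHess (hF : IsMinkowskiNorm F) (v : Plane) :
    ContinuousOn (fun u => minkHess F u u v) {(0 : Plane)}ᶜ := by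
  have h : ContinuousOn (fun u => (1 / 2) * fderiv ℝ (fun x => F x ^ 2) u v) {(0 : Plane)}ᶜ :=
    continuousOn_const.mul
      ((hF.contDiffOn_sq.continuousOn_fderiv_of_isOpen isOpen_compl_singleton
        (by exact_mod_cast le_top)).clm_apply continuousOn_const)
  exact h.congr fun u hu => hF.minkHess_self hu v

lemma continuousOn_normalize (hF : IsMinkowskiNorm F) :
    ContinuousOn (fun x => (F x)⁻¹ • x) {(0 : Plane)}ᶜ :=
  (hF.continuous.continuousOn.inv₀ fun x hx => (hF.pos x hx).ne').smul continuousOn_id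

lemma isCompact_half (hF : IsMinkowskiNorm F) (φ : Plane →ₗ[ℝ] ℝ) :
    IsCompact {u | F u = 1 ∧ 0 ≤ φ u} := by
  have hφc : Continuous φ := φ.continuous_of_finiteDimensional
  have hK : IsCompact (Metric.sphere (0 : Plane) 1 ∩ {x | 0 ≤ φ x}) :=
    (isCompact_sphere 0 1).inter_right (isClosed_le continuous_const hφc)
  have hne : ∀ x ∈ Metric.sphere (0 : Plane) 1 ∩ {x | 0 ≤ φ x}, x ≠ 0 := fun x hx =>
    ne_zero_of_mem_unit_sphere (⟨x, hx.1⟩ : Metric.sphere (0 : Plane) 1)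
  convert hK.image_of_continuousOn (hF.continuousOn_normalize.mono hne) using 1
  ext u
  constructor
  · rintro ⟨hu, hφu⟩
    have hu0 := hF.ne_zero_of_eq_one hu
    have hn : 0 < ‖u‖ := norm_pos_iff.mpr hu0
    refine ⟨‖u‖⁻¹ • u, ⟨by simp [norm_smul, hn.ne'], ?_⟩, ?_⟩
    · simp only [mem_ofPred_eq, map_smul, smul_eq_mul]
      positivity
    · simp only [hF.homog _ (inv_nonneg.mpr hn.le), hu, mul_one, inv_inv, smul_smul]
      rw [mul_inv_cancel₀ hn.ne', one_smul]
  · rintro ⟨x, hx, rfl⟩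
    refine ⟨hF.map_inv_smul (hne x hx), ?_⟩
    have := hF.nonneg x
    have hx2 : 0 ≤ φ x := hx.2
    simp only [map_smul, smul_eq_mul]
    positivity

lemma minkHess_normalize (hF : IsMinkowskiNorm F) {x : Plane} (hx : x ≠ 0) :
    minkHess F ((F x)⁻¹ • x) ((F x)⁻¹ • x) x = F x := by
  have hpos := hF.pos x hx
  have h1 := hF.map_inv_smul hx
  rw [hF.minkHess_self (hF.ne_zero_of_eq_one h1), hF.fderiv_smul (inv_pos.mpr hpos)]
  simp only [FunLike.coe_smul, Pi.smul_apply, hF.fderiv_self hx, smul_eq_mul]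
  field_simp

lemma image_minkHess (hF : IsMinkowskiNorm F) (hv : v ≠ 0) (hφ : φ ≠ 0) (hφv : φ v = 0) :
    (fun u => minkHess F u u v) '' {u | F u = 1 ∧ 0 ≤ φ u} = Icc (-F (-v)) (F v) := by
  apply Subset.antisymm
  · rintro _ ⟨u, ⟨hu, -⟩, rfl⟩
    have h1 := hF.half_fderiv_le hu v
    have h2 := hF.half_fderiv_le hu (-v)
    rw [map_neg] at h2
    simp only [hF.minkHess_self (hF.ne_zero_of_eq_one hu), mem_Icc]
    constructor <;> linarith
  · obtain ⟨e, he, -⟩ := exists_decomp hv hφ hφv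
    -- A polygonal path from `-v` to `v` in the half-plane, with `φ` positive inside `(-1, 1)`.
    set γ : ℝ → Plane := fun t => (1 - |t|) • e + t • v with hγ
    have hφγ : ∀ t, φ (γ t) = 1 - |t| := fun t => by simp [hγ, he, hφv]
    have hγ0 : ∀ t, γ t ≠ 0 := fun t h => by
      have h1 := hφγ t
      rw [h, map_zero] at h1
      have h2 : t • v = 0 := by simpa [hγ, ← h1] using h
      rcases smul_eq_zero.mp h2 with h3 | h3
      · simp [h3] at h1
      · exact hv h3
    have hγc : Continuous γ := by fun_prop
    have hc : Continuous fun t => (F (γ t))⁻¹ • γ t :=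
      hF.continuousOn_normalize.comp_continuous hγc hγ0
    have hg : Continuous fun t => minkHess F ((F (γ t))⁻¹ • γ t) ((F (γ t))⁻¹ • γ t) v :=
      (hF.continuousOn_minkHess v).comp_continuous hc fun t =>
        hF.ne_zero_of_eq_one (hF.map_inv_smul (hγ0 t))
    have h1 : γ 1 = v := by simp [hγ]
    have h2 : γ (-1) = -v := by simp [hγ]
    have hivt := intermediate_value_Icc (show (-1 : ℝ) ≤ 1 by norm_num) hg.continuousOn
    have hneg : minkHess F ((F (-v))⁻¹ • -v) ((F (-v))⁻¹ • -v) v = -F (-v) := by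
      have h3 := hF.minkHess_normalize (neg_ne_zero.mpr hv)
      unfold minkHess at h3 ⊢
      rw [ContinuousLinearMap.map_neg] at h3
      linarith
    simp only [h1, h2, hneg, hF.minkHess_normalize hv] at hivt
    refine hivt.trans ?_
    rintro _ ⟨t, ht, rfl⟩
    refine ⟨_, ⟨hF.map_inv_smul (hγ0 t), ?_⟩, rfl⟩
    have := hF.nonneg (γ t)
    have h3 : 0 ≤ 1 - |t| := sub_nonneg.mpr (abs_le.mpr ht)
    rw [map_smul, hφγ, smul_eq_mul]
    positivity

/-- The map `u ↦ ⟨u, v⟩_u^F` is a homeomorphism from the half-indicatrix onto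
`[-F(-v), F(v)]`. -/
lemma exists_homeomorph_Icc (hF : IsMinkowskiNorm F) (hv : v ≠ 0) (hφ : φ ≠ 0) (hφv : φ v = 0) :
    ∃ E : {u : Plane // F u = 1 ∧ 0 ≤ φ u} ≃ₜ Icc (-F (-v)) (F v),
      ∀ u, (E u : ℝ) = minkHess F (u : Plane) (u : Plane) v := by
  have hcs : CompactSpace {u : Plane // F u = 1 ∧ 0 ≤ φ u} :=
    isCompact_iff_compactSpace.mp (hF.isCompact_half φ)
  have hcont : Continuous fun u : {u : Plane // F u = 1 ∧ 0 ≤ φ u} =>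
      minkHess F (u : Plane) (u : Plane) v :=
    (hF.continuousOn_minkHess v).comp_continuous continuous_subtype_val
      fun u => hF.ne_zero_of_eq_one u.2.1
  have hinj : Function.Injective fun u : {u : Plane // F u = 1 ∧ 0 ≤ φ u} =>
      minkHess F (u : Plane) (u : Plane) v :=
    fun u w h => Subtype.ext (hF.minkHess_injOn hv hφ hφv u.2 w.2 h)
  have hrange : range (fun u : {u : Plane // F u = 1 ∧ 0 ≤ φ u} =>
      minkHess F (u : Plane) (u : Plane) v) = Icc (-F (-v)) (F v) := by
    rw [← hF.image_minkHess hv hφ hφv, image_eq_range]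
    rfl
  exact ⟨(hcont.isClosedEmbedding hinj).isEmbedding.toHomeomorph.trans
    (Homeomorph.setCongr hrange), fun u => rfl⟩

end Plane

end IsMinkowskiNorm

/-! ### The refraction map -/

/-- The refraction map is a homeomorphism. -/
theorem refraction_map_homeomorphism
    (F₁ F₂ : EuclideanSpace ℝ (Fin 2) → ℝ)
    (hF₁ : IsMinkowskiNorm F₁) (hF₂ : IsMinkowskiNorm F₂)
    (v : EuclideanSpace ℝ (Fin 2)) (hv : v ≠ 0)
    (hagree : ∀ s : ℝ, F₁ (s • v) = F₂ (s • v))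
    (φ : EuclideanSpace ℝ (Fin 2) →ₗ[ℝ] ℝ) (hφ : φ ≠ 0) (hφv : φ v = 0) :
    ∃ T : {u : EuclideanSpace ℝ (Fin 2) // F₁ u = 1 ∧ 0 ≤ φ u} ≃ₜ
          {u : EuclideanSpace ℝ (Fin 2) // F₂ u = 1 ∧ 0 ≤ φ u},
      ∀ (u : {u : EuclideanSpace ℝ (Fin 2) // F₁ u = 1 ∧ 0 ≤ φ u})
        (w : {u : EuclideanSpace ℝ (Fin 2) // F₂ u = 1 ∧ 0 ≤ φ u}),
        minkHess F₁ (u : EuclideanSpace ℝ (Fin 2)) (u : EuclideanSpace ℝ (Fin 2)) v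
            = minkHess F₂ (w : EuclideanSpace ℝ (Fin 2)) (w : EuclideanSpace ℝ (Fin 2)) v
          ↔ w = T u := by
  obtain ⟨E₁, hE₁⟩ := hF₁.exists_homeomorph_Icc hv hφ hφv
  have h1 : F₁ v = F₂ v := by simpa using hagree 1
  have h2 : F₁ (-v) = F₂ (-v) := by simpa using hagree (-1)
  have h3 := hF₂.exists_homeomorph_Icc hv hφ hφv
  rw [← h1, ← h2] at h3
  obtain ⟨E₂, hE₂⟩ := h3
  refine ⟨E₁.trans E₂.symm, fun u w => ?_⟩
  rw [← hE₁, ← hE₂, Homeomorph.trans_apply, ← E₂.injective.eq_iff, E₂.apply_symm_apply,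
    Subtype.ext_iff, eq_comm]
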